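/- Let A₁ be a real symmetric positive definite n×n matrix, let A₀ be a real symmetric n×n matrix, and let 1 ≤ k ≤ n. Then the univariate polynomial g(t) = c_n^k(A₁·t − A₀) has degree exactly k with leading coefficient c_n^k(A₁) > 0, and every complex root of g is real. -/

import Mathlib

/-!
The roots of `g` are controlled through the characteristic polynomial. For `z` in the open upper
half plane put `M = z A₁ - A₀`. If `M v = s v` with `v ≠ 0`, then taking the imaginary part of
`v* M v = s v* v` gives `Im s · ‖v‖² = Im z · v* A₁ v > 0`, because `v* A₀ v` is real. So
all roots of `M.charpoly` lie in the open upper half plane (`im_pos_of_charpoly_root`). By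
Gauss–Lucas the same holds for all its nonconstant iterated derivatives
(`iterate_derivative_roots`); in particular the `(n-k)`-th one does not vanish at `0`. Its value
there is, up to a nonzero factor, the coefficient of degree `n - k` of `M.charpoly`, i.e. `± c_n^k(M)`.
Hence `g(z) ≠ 0`. Since `g` has real coefficients, it has no root in the lower half plane either.

The degree and leading coefficient come from those of each `det (t A₁|_S - A₀|_S)`, and
`c_n^k(A₁) > 0` because principal submatrices of `A₁` are positive definite.
-/

open Matrix Polynomial

/-- The principal minor of `X` indexed by the set `S`. -/
noncomputable def pminor {n : ℕ} (X : Matrix (Fin n) (Fin n) ℝ) (S : Finset (Fin n)) : ℝ :=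
  (X.submatrix (fun i : {i : Fin n // i ∈ S} => i.1) (fun i : {i : Fin n // i ∈ S} => i.1)).det

/-- The characteristic coefficient `c_n^k`, the sum of all `k × k` principal minors. -/
noncomputable def cnk {n : ℕ} (k : ℕ) (X : Matrix (Fin n) (Fin n) ℝ) : ℝ :=
  ∑ S ∈ Finset.powersetCard k (Finset.univ : Finset (Fin n)), pminor X S

/-- The polynomial `c_n^k(t A₁ - A₀)` in `t`. -/
noncomputable def cnkPoly {n : ℕ} (k : ℕ) (A₀ A₁ : Matrix (Fin n) (Fin n) ℝ) : ℝ[X] :=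
  ∑ S ∈ Finset.powersetCard k (Finset.univ : Finset (Fin n)),
    det ((X : ℝ[X]) • (A₁.submatrix (Subtype.val : S → Fin n) (Subtype.val : S → Fin n)).map C
      + (-A₀.submatrix (Subtype.val : S → Fin n) (Subtype.val : S → Fin n)).map C)

lemma aeval_cnkPoly {n : ℕ} (k : ℕ) (A₀ A₁ : Matrix (Fin n) (Fin n) ℝ) {K : Type*} [Field K]
    [Algebra ℝ K] (z : K) :
    aeval z (cnkPoly k A₀ A₁) =
      ∑ S ∈ Finset.powersetCard k (Finset.univ : Finset (Fin n)),
        ((z • A₁.map (algebraMap ℝ K) - A₀.map (algebraMap ℝ K)).submatrix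
          (Subtype.val : S → Fin n) (Subtype.val : S → Fin n)).det := by
  rw [cnkPoly, map_sum]
  refine Finset.sum_congr rfl fun S _ => ?_
  rw [AlgHom.map_det]
  congr 1
  ext i j
  simp [sub_eq_add_neg]
  exact mul_comm _ _

lemma re_star_dotProduct_mulVec {n : ℕ} (A : Matrix (Fin n) (Fin n) ℝ) (v : Fin n → ℂ) :
    (star v ⬝ᵥ (A.map (algebraMap ℝ ℂ)) *ᵥ v).re =
      (fun i => (v i).re) ⬝ᵥ A *ᵥ (fun i => (v i).re) +
      (fun i => (v i).im) ⬝ᵥ A *ᵥ (fun i => (v i).im) := by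
  simp [dotProduct, mulVec, Finset.sum_add_distrib]

lemma im_star_dotProduct_mulVec {n : ℕ} {A : Matrix (Fin n) (Fin n) ℝ} (hA : A.IsSymm)
    (v : Fin n → ℂ) : (star v ⬝ᵥ (A.map (algebraMap ℝ ℂ)) *ᵥ v).im = 0 := by
  have hH : (A.map (algebraMap ℝ ℂ)).IsHermitian := by
    ext i j
    simp [hA.apply]
  exact hH.im_star_dotProduct_mulVec_self v

lemma re_star_dotProduct_mulVec_pos {n : ℕ} {A : Matrix (Fin n) (Fin n) ℝ} (hA : A.PosDef)
    {v : Fin n → ℂ} (hv : v ≠ 0) : 0 < (star v ⬝ᵥ (A.map (algebraMap ℝ ℂ)) *ᵥ v).re := by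
  rw [re_star_dotProduct_mulVec]
  have hnn : ∀ x : Fin n → ℝ, 0 ≤ x ⬝ᵥ A *ᵥ x := fun x => by
    simpa using hA.posSemidef.dotProduct_mulVec_nonneg x
  have hpos : ∀ x : Fin n → ℝ, x ≠ 0 → 0 < x ⬝ᵥ A *ᵥ x := fun x hx => by
    simpa using hA.dotProduct_mulVec_pos hx
  by_cases h : (fun i => (v i).re) = 0
  · have h' : (fun i => (v i).im) ≠ 0 := by
      intro h'
      apply hv
      ext i
      exact Complex.ext (congrFun h i) (congrFun h' i)
    linarith [hnn fun i => (v i).re, hpos _ h']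
  · linarith [hnn fun i => (v i).im, hpos _ h]

lemma im_pos_of_charpoly_root {n : ℕ} {A₀ A₁ : Matrix (Fin n) (Fin n) ℝ} (hA₀ : A₀.IsSymm)
    (hA₁ : A₁.PosDef) {z s : ℂ} (hz : 0 < z.im)
    (hs : (z • A₁.map (algebraMap ℝ ℂ) - A₀.map (algebraMap ℝ ℂ)).charpoly.eval s = 0) :
    0 < s.im := by
  rw [eval_charpoly] at hs
  obtain ⟨v, hv, hMv⟩ := exists_mulVec_eq_zero_iff.mpr hs
  have h1 := re_star_dotProduct_mulVec_pos hA₁ hv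
  have h2 := re_star_dotProduct_mulVec_pos (PosDef.one (n := Fin n) (R := ℝ)) hv
  have h3 := im_star_dotProduct_mulVec (A := A₁) (by simpa [IsSymm, IsHermitian] using hA₁.1) v
  have h4 := im_star_dotProduct_mulVec hA₀ v
  have h5 := im_star_dotProduct_mulVec (isSymm_one (n := Fin n) (α := ℝ)) v
  have h := congrArg (fun w => (star v ⬝ᵥ w).im) hMv
  simp only [Matrix.map_one, map_zero, map_one, one_mulVec] at h2 h5
  simp only [sub_mulVec, scalar_apply, ← smul_one_eq_diagonal, smul_mulVec, one_mulVec,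
    dotProduct_sub, dotProduct_smul, dotProduct_zero, Complex.sub_im, smul_eq_mul,
    Complex.mul_im, Complex.zero_im, h3, h4, h5] at h
  have := mul_pos hz h1
  by_contra hneg
  nlinarith

/-- Gauss–Lucas, iterated, for the half plane `0 < Im s`. -/
lemma iterate_derivative_roots {p : ℂ[X]} (hp : ∀ s, p.eval s = 0 → 0 < s.im) (m : ℕ)
    (hm : m < p.natDegree) : ∀ s, (derivative^[m] p).eval s = 0 → 0 < s.im := by
  induction m with
  | zero => exact hp
  | succ m ih =>
    intro s hs
    have hdeg : ∀ j, j ≤ p.natDegree → (derivative^[j] p).natDegree = p.natDegree - j := by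
      intro j _
      induction j with
      | zero => simp
      | succ j ihj =>
        rw [Function.iterate_succ_apply', natDegree_derivative, ihj (by omega)]
        omega
    have h0 : 0 < (derivative^[m] p).degree := by
      rw [← natDegree_pos_iff_degree_pos, hdeg m (by omega)]
      omega
    have hne : derivative^[m + 1] p ≠ 0 := by
      intro h
      have := hdeg (m + 1) hm.le
      rw [h, natDegree_zero] at this
      omega
    rw [Function.iterate_succ_apply'] at hs hne
    have hmem := rootSet_derivative_subset_convexHull_rootSet h0
      (mem_rootSet.mpr ⟨hne, by simpa using hs⟩)
    have hsub : (derivative^[m] p).rootSet ℂ ⊆ {w : ℂ | 0 < w.im} := by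
      intro w hw
      exact ih (by omega) w (by simpa using (mem_rootSet.mp hw).2)
    exact convexHull_min hsub (convex_halfSpace_im_gt 0) hmem

lemma aeval_cnkPoly_ne_zero {n k : ℕ} (hk1 : 1 ≤ k) (hkn : k ≤ n)
    {A₀ A₁ : Matrix (Fin n) (Fin n) ℝ} (hA₀ : A₀.IsSymm) (hA₁ : A₁.PosDef) {z : ℂ}
    (hz : 0 < z.im) : aeval z (cnkPoly k A₀ A₁) ≠ 0 := by
  intro h
  rw [aeval_cnkPoly] at h
  set M := z • A₁.map (algebraMap ℝ ℂ) - A₀.map (algebraMap ℝ ℂ) with hM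
  have hc := M.charpoly_coeff_eq_sum_minors k (by simpa using hkn)
  rw [h, mul_zero, Fintype.card_fin] at hc
  have hroot : (derivative^[n - k] M.charpoly).eval 0 = 0 := by
    rw [← coeff_zero_eq_eval_zero, coeff_iterate_derivative, zero_add, hc, smul_zero]
  have := iterate_derivative_roots
    (fun s hs => im_pos_of_charpoly_root hA₀ hA₁ hz hs) (n - k)
    (by rw [charpoly_natDegree_eq_dim, Fintype.card_fin]; omega) 0 hroot
  simp at this

theorem stmt16 {n k : ℕ} (hk1 : 1 ≤ k) (hkn : k ≤ n)
    (A₀ A₁ : Matrix (Fin n) (Fin n) ℝ) (hA₀ : A₀.IsSymm) (hA₁ : A₁.PosDef) :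
    ∃ P : Polynomial ℝ,
      (∀ t : ℝ, P.eval t = cnk k (t • A₁ - A₀)) ∧
      P.natDegree = k ∧
      P.leadingCoeff = cnk k A₁ ∧ 0 < cnk k A₁ ∧
      ∀ z : ℂ, Polynomial.aeval z P = 0 → z.im = 0 := by
  have hpos : 0 < cnk k A₁ := by
    refine Finset.sum_pos (fun S _ => ?_) ?_
    · exact (hA₁.submatrix Subtype.val_injective).det_pos
    · exact Finset.powersetCard_nonempty.mpr (by simpa using hkn)
  have hcoeff : (cnkPoly k A₀ A₁).coeff k = cnk k A₁ := by
    rw [cnkPoly, finsetSum_coeff]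
    refine Finset.sum_congr rfl fun S hS => ?_
    have hcard : Fintype.card S = k := by
      rw [Fintype.card_coe, (Finset.mem_powersetCard.mp hS).2]
    conv_lhs => rw [← hcard]
    exact coeff_det_X_add_C_card _ _
  have hle : (cnkPoly k A₀ A₁).natDegree ≤ k := by
    refine natDegree_sum_le_of_forall_le _ _ fun S hS => ?_
    refine (natDegree_det_X_add_C_le _ _).trans ?_
    rw [Fintype.card_coe, (Finset.mem_powersetCard.mp hS).2]
  have hdeg : (cnkPoly k A₀ A₁).natDegree = k :=
    natDegree_eq_of_le_of_coeff_ne_zero hle (by rw [hcoeff]; exact hpos.ne')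
  refine ⟨cnkPoly k A₀ A₁, fun t => ?_, hdeg, ?_, hpos, fun z hz => ?_⟩
  · rw [← coe_aeval_eq_eval, aeval_cnkPoly]
    rfl
  · rw [leadingCoeff, hdeg, hcoeff]
  · rcases lt_trichotomy z.im 0 with h | h | h
    · refine absurd ?_ (aeval_cnkPoly_ne_zero hk1 hkn hA₀ hA₁
        (z := (starRingEnd ℂ) z) (by simpa using h))
      rw [aeval_conj, hz, map_zero]
    · exact h
    · exact absurd hz (aeval_cnkPoly_ne_zero hk1 hkn hA₀ hA₁ h)
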